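/- arXiv:1401.0012 — 2 statements merged into one kernel-verified Lean document; each statement's English description precedes it below -/
import Mathlib

section
/- For every nonnegative integer n and every j with 1 ≤ j ≤ 2^n, we have 1/c(n,j) = c(n, 2^n − j + 1). -/
/-!
Taking reciprocals sends the children `x / (x + 1), x + 1` of a positive `x` to
`1 / x + 1, (1 / x) / (1 / x + 1)`, which are the children of `1 / x` in the opposite order.
By induction, inverting every entry of a row therefore reverses the row
(`cwRow_reverse`), and the formula is the entrywise form of this identity.
-/

/-- Row `n` of the Calkin-Wilf tree, as a list of rationals. -/
def cwRow : ℕ → List ℚ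
  | 0 => [1]
  | n + 1 => (cwRow n).flatMap fun x => [x / (x + 1), x + 1]

/-- `c n j` is the `j`-th entry (1-indexed) of row `n` of the Calkin-Wilf tree. -/
def c (n j : ℕ) : ℚ := (cwRow n).getD (j - 1) 0

theorem cwRow_length (n : ℕ) : (cwRow n).length = 2 ^ n := by
  induction n with
  | zero => rfl
  | succ n ih => simp [cwRow, List.length_flatMap, ih, pow_succ]

theorem cwRow_pos (n : ℕ) : ∀ x ∈ cwRow n, 0 < x := by
  induction n with
  | zero => simp [cwRow]
  | succ n ih =>
    intro y hy
    simp only [cwRow, List.mem_flatMap, List.mem_cons, List.not_mem_nil, or_false] at hy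
    obtain ⟨x, hx, rfl | rfl⟩ := hy
    · have := ih x hx
      positivity
    · have := ih x hx
      positivity

theorem cwRow_reverse (n : ℕ) : (cwRow n).reverse = (cwRow n).map (·⁻¹) := by
  induction n with
  | zero => simp [cwRow]
  | succ n ih =>
    simp only [cwRow]
    rw [List.reverse_flatMap, ih, List.flatMap_map, List.map_flatMap]
    refine List.flatMap_congr fun x hx => ?_
    have hpos := cwRow_pos n x hx
    have h0 : x ≠ 0 := hpos.ne'
    have h1 : x + 1 ≠ 0 := by positivity
    simp only [Function.comp, List.reverse_cons, List.reverse_nil, List.nil_append,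
      List.cons_append, List.map_cons, List.map_nil, List.cons.injEq, and_true]
    constructor
    · field_simp
      ring
    · field_simp
      ring

theorem symmetry_formula (n j : ℕ) (h1 : 1 ≤ j) (h2 : j ≤ 2 ^ n) :
    1 / c n j = c n (2 ^ n - j + 1) := by
  have hlen := cwRow_length n
  have key : (cwRow n).reverse[j - 1]? = ((cwRow n).map (·⁻¹))[j - 1]? := by
    rw [cwRow_reverse]
  rw [List.getElem?_reverse (by omega), List.getElem?_map] at key
  have e : (cwRow n).length - 1 - (j - 1) = 2 ^ n - j + 1 - 1 := by omega
  rw [e] at key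
  unfold c
  rw [List.getD_eq_getElem?_getD, List.getD_eq_getElem?_getD, key,
    List.getElem?_eq_getElem (by omega)]
  simp
end

section
/- Let J = !![0,1;1,0]. For every nonnegative integer n and every j with 1 ≤ j ≤ 2^n, we have J * W(n,j) * J = W(n, 2^n − j + 1). (Symmetry formula: the involution Φ(f)(z) = 1/f(1/z) reflects each row of the tree.) -/
/-!
Conjugation by the involution `J = !![0, 1; 1, 0]` swaps `L1` and `R1`. Hence it exchanges the two
children of a node while commuting with passage to children, and by induction on `n` conjugating
every entry of row `n` by `J` reverses the row (`mRow_reverse`). The formula is this identity of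
lists, read off at position `j`.
-/

def L1 : Matrix (Fin 2) (Fin 2) ℤ := !![1, 0; 1, 1]

def R1 : Matrix (Fin 2) (Fin 2) ℤ := !![1, 1; 0, 1]

/-- Row `n` of the matrix tree, as a list of matrices. -/
def mRow : ℕ → List (Matrix (Fin 2) (Fin 2) ℤ)
  | 0 => [1]
  | n + 1 => (mRow n).flatMap fun M => [L1 * M, R1 * M]

/-- `W n j` is the `j`-th entry (1-indexed) of row `n` of the matrix tree. -/
def W (n j : ℕ) : Matrix (Fin 2) (Fin 2) ℤ := (mRow n).getD (j - 1) 0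

theorem mRow_length (n : ℕ) : (mRow n).length = 2 ^ n := by
  induction n with
  | zero => rfl
  | succ n ih => simp [mRow, List.length_flatMap, ih, pow_succ]

theorem conj_L1_mul (M : Matrix (Fin 2) (Fin 2) ℤ) :
    !![0, 1; 1, 0] * (L1 * M) * !![0, 1; 1, 0] =
      R1 * (!![0, 1; 1, 0] * M * !![0, 1; 1, 0]) := by
  have h : (!![0, 1; 1, 0] : Matrix (Fin 2) (Fin 2) ℤ) * L1 = R1 * !![0, 1; 1, 0] := by
    simp [L1, R1]
  simp only [← Matrix.mul_assoc, h]

theorem conj_R1_mul (M : Matrix (Fin 2) (Fin 2) ℤ) :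
    !![0, 1; 1, 0] * (R1 * M) * !![0, 1; 1, 0] =
      L1 * (!![0, 1; 1, 0] * M * !![0, 1; 1, 0]) := by
  have h : (!![0, 1; 1, 0] : Matrix (Fin 2) (Fin 2) ℤ) * R1 = L1 * !![0, 1; 1, 0] := by
    simp [L1, R1]
  simp only [← Matrix.mul_assoc, h]

theorem mRow_reverse (n : ℕ) :
    (mRow n).reverse = (mRow n).map fun M => !![0, 1; 1, 0] * M * !![0, 1; 1, 0] := by
  induction n with
  | zero => simp [mRow, Matrix.one_fin_two]
  | succ n ih =>
    simp only [mRow, List.reverse_flatMap, ih, List.flatMap_map, List.map_flatMap,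
      Function.comp_def, List.map_cons, List.map_nil, conj_L1_mul, conj_R1_mul,
      List.reverse_cons, List.reverse_nil, List.nil_append, List.cons_append]

theorem matrix_symmetry_formula (n j : ℕ) (h1 : 1 ≤ j) (h2 : j ≤ 2 ^ n) :
    !![0, 1; 1, 0] * W n j * !![0, 1; 1, 0] = W n (2 ^ n - j + 1) := by
  have hl := mRow_length n
  have hj : j - 1 < (mRow n).length := by omega
  have hk : 2 ^ n - j < (mRow n).length := by omega
  have h := congrArg (fun l => l[j - 1]?) (mRow_reverse n)
  have hidx : 2 ^ n - 1 - (j - 1) = 2 ^ n - j := by omega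
  simp only [List.getElem?_reverse hj, List.getElem?_map, hl, hidx,
    List.getElem?_eq_getElem hj, List.getElem?_eq_getElem hk, Option.map_some,
    Option.some.injEq] at h
  simp only [W, Nat.add_sub_cancel, List.getD_eq_getElem _ _ hj, List.getD_eq_getElem _ _ hk, h]
end
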